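/- arXiv:2307.04813 — 5 statements merged into one kernel-verified Lean document; each statement's English description precedes it below -/
import Mathlib

section
/- Let L ⊆ k^E be a linear subspace and n ∈ E. Then the standard basis vector e_n lies in L if and only if every basis of L contains n (i.e., n is a coloop of the matroid of L). -/
/-!
If `e_n ∈ L`, then `e_n` is killed by the projection to any `B` not containing `n`, so no such `B`
is a basis.

Conversely, if `e_n ∉ L`, then no nonzero vector of `L` vanishes off `n`, i.e. `L` injects into the
coordinates `{n}ᶜ`. A minimal coordinate set `B ⊆ {n}ᶜ` into which `L` still injects is a basis
(`isBasisOf_of_minimal`): minimality at `b ∈ B` gives a vector of `L` that vanishes on `B \ {b}` but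
not at `b`, and these vectors, rescaled, map to the standard basis of `k^B`.
-/

/-- `B` is a basis of the linear subspace `L ⊆ k^ι`: the composition of the inclusion
`L ↪ k^ι` with the coordinate projection `k^ι ↠ k^B` is a linear isomorphism
(equivalently, the linear map below is bijective). -/
def IsBasisOf {k ι : Type*} [Field k] (L : Submodule k (ι → k)) (B : Set ι) : Prop :=
  Function.Bijective (fun x : L => fun b : B => (x : ι → k) (b : ι))

/-- An inclusion-minimal set of coordinates on which the vectors of `L` are determined is a basis
of `L`. -/
lemma isBasisOf_of_minimal {k E : Type*} [Field k] [Fintype E]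
    (L : Submodule k (E → k)) (B : Set E)
    (hB : Minimal (fun S : Set E => ∀ x ∈ L, (∀ i ∈ S, x i = 0) → x = 0) B) :
    IsBasisOf L B := by
  classical
  refine ⟨fun x y hxy => ?_, fun f => ?_⟩
  · have h := hB.prop (x - y : E → k) (L.sub_mem x.2 y.2) fun i hi => by
      simpa [sub_eq_zero] using congrFun hxy ⟨i, hi⟩
    exact Subtype.ext (sub_eq_zero.mp h)
  · have key : ∀ b : B, ∃ y ∈ L, ∀ i : B, y i = if i = b then 1 else 0 := by
      intro b
      have hnot := hB.not_prop_of_lt (y := B \ {b.1}) (Set.sdiff_singleton_ssubset.mpr b.2)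
      push Not at hnot
      obtain ⟨x, hxL, hx, hx0⟩ := hnot
      have hxb : x b ≠ 0 := by
        intro h
        refine hx0 (hB.prop x hxL fun i hi => ?_)
        by_cases hib : i = b
        · rw [hib, h]
        · exact hx i ⟨hi, hib⟩
      refine ⟨(x b)⁻¹ • x, L.smul_mem _ hxL, fun i => ?_⟩
      split_ifs with hib
      · simp [hib, hxb]
      · simp [hx i ⟨i.2, fun h => hib (Subtype.ext h)⟩]
    choose y hyL hy using key
    refine ⟨⟨∑ b, f b • y b, L.sum_mem fun b _ => L.smul_mem _ (hyL b)⟩, ?_⟩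
    funext i
    simp [Finset.sum_apply, hy]

/-- The standard basis vector `e_n` lies in `L` if and only if every basis of `L`
contains `n`, i.e. `n` is a coloop of the matroid of `L`. -/
theorem single_mem_iff_forall_basis_mem {k E : Type*} [Field k] [Fintype E] [DecidableEq E]
    (L : Submodule k (E → k)) (n : E) :
    Pi.single n (1 : k) ∈ L ↔ ∀ B : Set E, IsBasisOf L B → n ∈ B := by
  constructor
  · intro hn B hB
    by_contra hnB
    have h : (⟨Pi.single n 1, hn⟩ : L) = 0 := hB.1 <| by
      funext b
      have hb : (b : E) ≠ n := fun h => hnB (h ▸ b.2)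
      simp [hb]
    have := congrFun (congrArg Subtype.val h) n
    simp at this
  · intro h
    by_contra hn
    have hinj : ∀ x ∈ L, (∀ i ∈ ({n}ᶜ : Set E), x i = 0) → x = 0 := by
      intro x hxL hx
      have hxe : x = x n • Pi.single n (1 : k) := by
        funext i
        by_cases hi : i = n
        · subst hi; simp
        · simp [hi, hx i hi]
      by_cases hxn : x n = 0
      · rw [hxe, hxn, zero_smul]
      · exact absurd ((L.smul_mem_iff hxn).mp (hxe ▸ hxL)) hn
    obtain ⟨B, hBn, hB⟩ := exists_minimal_le_of_wellFoundedLT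
      (fun S : Set E => ∀ x ∈ L, (∀ i ∈ S, x i = 0) → x = 0) _ hinj
    exact hBn (h B (isBasisOf_of_minimal L B hB)) rfl
end

section
/- Let L ⊆ k^E be a linear subspace, n ∈ E, and B ⊆ E ∖ {n}. (a) If n is not a coloop of L (i.e., e_n ∉ L), then the coordinate projection L∖n → k^B is an isomorphism if and only if the coordinate projection L → k^B is an isomorphism. (b) If n is not a loop of L (i.e., some x ∈ L has x(n) ≠ 0), then the coordinate projection L/n → k^B is an isomorphism if and only if the coordinate projection L → k^{B ∪ {n}} is an isomorphism. Consequently, the bases of L∖n are the bases of L avoiding n, and the bases of L/n are the sets B with B ∪ {n} a basis of L. -/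
/-- Extension by zero at the coordinate `n`, identifying `k^{E∖{n}} × k ≃ k^E`. -/
def extZero (k : Type*) [Field k] {E : Type*} [DecidableEq E] (n : E) :
    ({e : E // e ≠ n} → k) →ₗ[k] (E → k) where
  toFun x := fun e => if h : e = n then 0 else x ⟨e, h⟩
  map_add' x y := by funext e; by_cases h : e = n <;> simp [h]
  map_smul' c x := by funext e; by_cases h : e = n <;> simp [h]

/-- The deletion `L∖n ⊆ k^{E∖{n}}`: the image of `L` under the coordinate projection
`k^E ↠ k^{E∖{n}}`. -/
def delSub {k E : Type*} [Field k] (L : Submodule k (E → k)) (n : E) :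
    Submodule k ({e : E // e ≠ n} → k) :=
  L.map (LinearMap.funLeft k k Subtype.val)

/-- The contraction `L/n = {x ∈ k^{E∖{n}} : (x,0) ∈ L}`. -/
def conSub {k E : Type*} [Field k] [DecidableEq E] (L : Submodule k (E → k)) (n : E) :
    Submodule k ({e : E // e ≠ n} → k) :=
  L.comap (extZero k n)

theorem isBasisOf_iff {k ι : Type*} [Field k] (L : Submodule k (ι → k)) (B : Set ι) :
    IsBasisOf L B ↔
      (∀ x ∈ L, (∀ b ∈ B, x b = 0) → x = 0) ∧
      (∀ y : ι → k, ∃ x ∈ L, ∀ b ∈ B, x b = y b) := by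
  classical
  constructor
  · rintro ⟨hi, hs⟩
    refine ⟨fun x hx h => ?_, fun y => ?_⟩
    · exact congrArg Subtype.val
        (@hi ⟨x, hx⟩ 0 (funext fun b => by simpa using h b b.2))
    · obtain ⟨x, hx⟩ := hs fun b => y b
      exact ⟨x, x.2, fun b hb => congrFun hx ⟨b, hb⟩⟩
  · rintro ⟨hi, hs⟩
    refine ⟨fun x y hxy => ?_, fun y => ?_⟩
    · refine Subtype.ext (sub_eq_zero.1 (hi _ (L.sub_mem x.2 y.2) fun b hb => ?_))
      simpa [sub_eq_zero] using congrFun hxy ⟨b, hb⟩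
    · obtain ⟨x, hx, h⟩ := hs fun i => if hi : i ∈ B then y ⟨i, hi⟩ else 0
      exact ⟨⟨x, hx⟩, funext fun b => by simpa using h b b.2⟩

theorem extZero_self {k E : Type*} [Field k] [DecidableEq E] (n : E)
    (x : {e : E // e ≠ n} → k) : extZero k n x n = 0 := by
  simp [extZero]

theorem extZero_coe {k E : Type*} [Field k] [DecidableEq E] (n : E)
    (x : {e : E // e ≠ n} → k) (e : {e : E // e ≠ n}) : extZero k n x e = x e := by
  simp [extZero, e.2]

theorem extZero_restrict {k E : Type*} [Field k] [DecidableEq E] (n : E)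
    (x : E → k) (hx : x n = 0) : extZero k n (fun e => x e) = x := by
  funext e
  by_cases h : e = n
  · subst h; rw [extZero_self, hx]
  · exact extZero_coe n _ ⟨e, h⟩

/-- (a) If `n` is not a coloop of `L` (i.e. `e_n ∉ L`), then `B` is a basis of the
deletion `L∖n` iff `B` is a basis of `L`.  (b) If `n` is not a loop of `L` (i.e. some
`x ∈ L` has `x n ≠ 0`), then `B` is a basis of the contraction `L/n` iff `B ∪ {n}` is a
basis of `L`.  Consequently the bases of `L∖n` are the bases of `L` avoiding `n`, and
the bases of `L/n` are the sets `B` with `B ∪ {n}` a basis of `L`. -/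
theorem basis_del_con {k E : Type*} [Field k] [Fintype E] [DecidableEq E]
    (L : Submodule k (E → k)) (n : E) (B : Set {e : E // e ≠ n}) :
    (Pi.single n (1 : k) ∉ L →
      (IsBasisOf (delSub L n) B ↔ IsBasisOf L (Subtype.val '' B))) ∧
    ((∃ x ∈ L, x n ≠ 0) →
      (IsBasisOf (conSub L n) B ↔ IsBasisOf L (insert n (Subtype.val '' B)))) := by
  constructor
  · intro hn
    rw [isBasisOf_iff, isBasisOf_iff]
    constructor
    · rintro ⟨hi, hs⟩
      refine ⟨fun x hx h => ?_, fun y => ?_⟩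
      · have h0 : LinearMap.funLeft k k (Subtype.val : {e : E // e ≠ n} → E) x = 0 :=
          hi _ ⟨x, hx, rfl⟩ fun b hb => h b ⟨b, hb, rfl⟩
        have hxs : x = x n • Pi.single n (1 : k) := by
          funext e
          by_cases he : e = n
          · subst he; simp
          · simpa [he] using congrFun h0 ⟨e, he⟩
        by_cases hxn : x n = 0
        · rw [hxs, hxn, zero_smul]
        · rw [hxs] at hx
          exact absurd ((L.smul_mem_iff hxn).1 hx) hn
      · obtain ⟨_, ⟨x, hx, rfl⟩, h⟩ := hs fun e => y e
        refine ⟨x, hx, ?_⟩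
        rintro _ ⟨b, hb, rfl⟩
        exact h b hb
    · rintro ⟨hi, hs⟩
      refine ⟨?_, fun y => ?_⟩
      · rintro _ ⟨x, hx, rfl⟩ h
        rw [hi x hx (by rintro _ ⟨b, hb, rfl⟩; exact h b hb), map_zero]
      · obtain ⟨x, hx, h⟩ := hs (extZero k n y)
        exact ⟨_, ⟨x, hx, rfl⟩, fun b hb => (h b ⟨b, hb, rfl⟩).trans (extZero_coe n y b)⟩
  · rintro ⟨w, hw, hwn⟩
    rw [isBasisOf_iff, isBasisOf_iff]
    constructor
    · rintro ⟨hi, hs⟩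
      refine ⟨fun x hx h => ?_, fun y => ?_⟩
      · have hx0 := extZero_restrict n x (h n (Set.mem_insert _ _))
        have hz := hi (fun e => x e) (show extZero k n _ ∈ L by rwa [hx0])
          fun b hb => h b (Or.inr ⟨b, hb, rfl⟩)
        rw [← hx0, hz, map_zero]
      · obtain ⟨z, hz, h⟩ := hs fun e => y e - y n / w n * w e
        refine ⟨extZero k n z + (y n / w n) • w, L.add_mem hz (L.smul_mem _ hw), ?_⟩
        rintro _ (rfl | ⟨b, hb, rfl⟩)
        · simp [extZero_self, hwn]
        · simp [extZero_coe, h b hb]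
    · rintro ⟨hi, hs⟩
      refine ⟨fun x hx h => ?_, fun y => ?_⟩
      · have h0 : extZero k n x = 0 := by
          refine hi _ hx ?_
          rintro _ (rfl | ⟨b, hb, rfl⟩)
          · exact extZero_self _ x
          · rw [extZero_coe, h b hb]
        funext e
        rw [← extZero_coe n x e, h0]; rfl
      · obtain ⟨x, hx, h⟩ := hs (extZero k n y)
        have hxn : x n = 0 := (h n (Set.mem_insert _ _)).trans (extZero_self n y)
        refine ⟨fun e => x e, show extZero k n _ ∈ L by rwa [extZero_restrict n x hxn], ?_⟩
        exact fun b hb => (h b (Or.inr ⟨b, hb, rfl⟩)).trans (extZero_coe n y b)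
end

section
/- Let L ⊆ k^E be a linear subspace and let L^⊥ := {y ∈ k^E : Σ_{i∈E} x(i)·y(i) = 0 for all x ∈ L} be its orthogonal complement with respect to the standard bilinear form. Then for every B ⊆ E, the coordinate projection L → k^B is an isomorphism if and only if the coordinate projection L^⊥ → k^{E∖B} is an isomorphism. In other words, L^⊥ realizes the dual matroid: B is a basis of L if and only if E ∖ B is a basis of L^⊥. -/
/-- The orthogonal complement `L^⊥ = {y : Σ_i x i * y i = 0 for all x ∈ L}` of `L` with
respect to the standard bilinear form on `k^E`. -/
def perpSub {k E : Type*} [Field k] [Fintype E] (L : Submodule k (E → k)) :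
    Submodule k (E → k) where
  carrier := {y | ∀ x ∈ L, ∑ i, x i * y i = 0}
  add_mem' := by
    intro a b ha hb x hx
    simp only [Set.mem_setOf_eq] at ha hb ⊢
    simp [Pi.add_apply, mul_add, Finset.sum_add_distrib, ha x hx, hb x hx]
  zero_mem' := by
    intro x hx
    simp
  smul_mem' := by
    intro c a ha x hx
    simp only [Set.mem_setOf_eq] at ha ⊢
    simp only [Pi.smul_apply, smul_eq_mul, mul_left_comm, ← Finset.mul_sum, ha x hx,
      mul_zero]

lemma dotProductBilin_isRefl {k E : Type*} [Field k] [Fintype E] :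
    LinearMap.BilinForm.IsRefl (dotProductBilin k k : LinearMap.BilinForm k (E → k)) :=
  fun x y h => by simpa [dotProduct_comm] using h

lemma dotProductBilin_nondegenerate {k E : Type*} [Field k] [Fintype E] :
    LinearMap.BilinForm.Nondegenerate (dotProductBilin k k : LinearMap.BilinForm k (E → k)) :=
  ⟨fun x h => dotProduct_eq_zero x h,
    fun x h => dotProduct_eq_zero x fun y => (dotProduct_comm x y).trans (h y)⟩

lemma perpSub_eq_orthogonal {k E : Type*} [Field k] [Fintype E] (L : Submodule k (E → k)) :
    perpSub L = LinearMap.BilinForm.orthogonal (dotProductBilin k k) L :=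
  rfl

lemma perpSub_perpSub {k E : Type*} [Field k] [Fintype E] (L : Submodule k (E → k)) :
    perpSub (perpSub L) = L := by
  simp only [perpSub_eq_orthogonal]
  exact LinearMap.BilinForm.orthogonal_orthogonal dotProductBilin_nondegenerate
    dotProductBilin_isRefl L

lemma IsBasisOf.finrank_eq {k E : Type*} [Field k] [Fintype E] {L : Submodule k (E → k)}
    {B : Set E} (h : IsBasisOf L B) : Module.finrank k L = Nat.card B := by
  classical
  have e := (LinearEquiv.ofBijective
    (LinearMap.funLeft k k ((↑) : B → E) ∘ₗ L.subtype) h).finrank_eq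
  rw [e, Module.finrank_fintype_fun_eq_card, Nat.card_eq_fintype_card]

lemma IsBasisOf.perpSub_compl {k E : Type*} [Field k] [Fintype E] {L : Submodule k (E → k)}
    {B : Set E} (h : IsBasisOf L B) : IsBasisOf (perpSub L) Bᶜ := by
  classical
  let f := LinearMap.funLeft k k ((↑) : ↥(Bᶜ) → E) ∘ₗ (perpSub L).subtype
  have hf : Function.Injective f := by
    refine (injective_iff_map_eq_zero f).2 fun y hy => ?_
    have hy0 : ∀ i, i ∉ B → (y : E → k) i = 0 := fun i hi => congrFun hy ⟨i, hi⟩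
    refine Subtype.ext (funext fun b => ?_)
    by_cases hb : b ∈ B
    -- Pair `y` with a lift `x ∈ L` of the coordinate vector at `b`.
    · obtain ⟨x, hx⟩ := h.2 (Pi.single ⟨b, hb⟩ 1)
      have hxy := y.2 x x.2
      have hxB : ∀ i (hi : i ∈ B), (x : E → k) i =
          Pi.single (M := fun _ : B => k) ⟨b, hb⟩ 1 ⟨i, hi⟩ :=
        fun i hi => congrFun hx ⟨i, hi⟩
      rw [Finset.sum_eq_single b] at hxy
      · simpa [hxB b hb] using hxy
      · intro i _ hib
        by_cases hi : i ∈ B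
        · simp [hxB i hi, hib]
        · simp [hy0 i hi]
      · simp
    · exact hy0 b hb
  have hdim : Module.finrank k (perpSub L) = Module.finrank k (↥(Bᶜ) → k) := by
    rw [perpSub_eq_orthogonal, LinearMap.BilinForm.finrank_orthogonal
      dotProductBilin_nondegenerate, h.finrank_eq, Module.finrank_fintype_fun_eq_card,
      Module.finrank_fintype_fun_eq_card, Nat.card_eq_fintype_card, Fintype.card_compl_set]
  exact ⟨hf, (LinearMap.injective_iff_surjective_of_finrank_eq_finrank hdim).1 hf⟩

/-- `B` is a basis of `L` if and only if `E ∖ B` is a basis of `L^⊥`: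
the orthogonal complement realizes the dual matroid. -/
theorem basis_perp_compl {k E : Type*} [Field k] [Fintype E]
    (L : Submodule k (E → k)) (B : Set E) :
    IsBasisOf L B ↔ IsBasisOf (perpSub L) Bᶜ := by
  refine ⟨fun h => h.perpSub_compl, fun h => ?_⟩
  simpa only [perpSub_perpSub, compl_compl] using h.perpSub_compl
end

section
/- Let E be a finite set, n ∈ E, and (F_1, …, F_ℓ) an ordered set partition of E ∖ {n} (the F_j are pairwise disjoint nonempty sets with union E ∖ {n}); write S_j = F_1 ∪ ⋯ ∪ F_j, with S_0 = ∅. For 1 ≤ i ≤ ℓ+1 define the cone C^i ⊆ ℝ^E as the set of all vectors Σ_{j=1}^{ℓ} λ_j·𝟙_{T^i_j} + μ·𝟙_E with λ_j ≥ 0 and μ ∈ ℝ, where T^i_j = S_j for 1 ≤ j ≤ i−1 and T^i_j = S_{j−1} ∪ {n} for i ≤ j ≤ ℓ. For 1 ≤ i ≤ ℓ define D^i ⊆ ℝ^E as the set of all vectors Σ_{j=1}^{ℓ−1} λ_j·𝟙_{U^i_j} + μ·𝟙_E with λ_j ≥ 0 and μ ∈ ℝ, where U^i_j = S_j for 1 ≤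 j ≤ i−1 and U^i_j = S_j ∪ {n} for i ≤ j ≤ ℓ−1. Then C^i ∩ C^{i+1} = D^i for every 1 ≤ i ≤ ℓ. -/
/-!
The generators of `C i` and `C (i + 1)` agree except in position `i`, where they are
`S (i - 1) ∪ {n}` and `S i` respectively; the remaining ones, renumbered by skipping `i`, are
exactly the generators of `D i` (`sum_skip`, `gen_skip`). Hence `D i` lies in both cones.
Conversely, for `x ∈ F i` the generators of `D i` do not separate `n` from `x`
(`ind_merged_eq`), so the coefficient of the exceptional generator is `v n - v x` for a
representation of `v` in `C i`, and `v x - v n` for one in `C (i + 1)`. If `v` lies in both cones,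
both numbers are nonnegative, so they vanish and `v ∈ D i`.
-/

/-- The indicator vector `𝟙_T ∈ ℝ^E` of a subset `T ⊆ E`. -/
noncomputable def ind {E : Type*} (T : Set E) : E → ℝ := T.indicator 1

/-- The increasing enumeration of the naturals different from `i`. -/
def skip (i j : ℕ) : ℕ := if j < i then j else j + 1

theorem sum_skip {M : Type*} [AddCommMonoid M] (g : ℕ → M) {i ℓ : ℕ} (h1 : 1 ≤ i) (h2 : i ≤ ℓ) :
    ∑ j ∈ Finset.Icc 1 ℓ, g j = g i + ∑ j ∈ Finset.Icc 1 (ℓ - 1), g (skip i j) := by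
  rw [← Finset.add_sum_erase _ g (Finset.mem_Icc.2 ⟨h1, h2⟩)]
  congr 1
  symm
  refine Finset.sum_nbij' (skip i) (fun j => if j < i then j else j - 1) ?_ ?_ ?_ ?_ ?_
  all_goals intro j hj
  all_goals simp only [Finset.mem_erase, Finset.mem_Icc, skip] at hj ⊢
  all_goals grind

/-- Away from position `i`, both `C i` and `C (i + 1)` have the generators of `D i`. -/
theorem gen_skip {E : Type*} (n : E) (S : ℕ → Set E) {i k : ℕ} (hk : k = i ∨ k = i + 1) (j : ℕ) :
    (if skip i j < k then S (skip i j) else S (skip i j - 1) ∪ {n}) =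
      if j < i then S j else S j ∪ {n} := by
  unfold skip
  by_cases h : j < i
  · have : j < k := by omega
    simp [h, this]
  · have : ¬ j + 1 < k := by omega
    simp [h, this]

/-- A generator of `D i` takes the same value at `n` and at a point of `F i`, these being in the
same block of the merged partition. -/
theorem ind_merged_eq {E : Type*} {n x : E} {S : ℕ → Set E} {i : ℕ}
    (hn : ∀ j < i, n ∉ S j) (hx : ∀ j < i, x ∉ S j) (hx' : ∀ j, i ≤ j → x ∈ S j) (j : ℕ) :
    ind (if j < i then S j else S j ∪ {n}) n = ind (if j < i then S j else S j ∪ {n}) x := by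
  by_cases h : j < i
  · simp [ind, h, hn j h, hx j h]
  · simp [ind, h, hx' j (by omega)]

/-- For an ordered set partition `(F_1, …, F_ℓ)` of `E ∖ {n}` with initial unions
`S_j = F_1 ∪ ⋯ ∪ F_j`, the cones `C^i` (attached to inserting `{n}` in the `i`-th slot)
and `D^i` (attached to merging `n` into `F_i`) satisfy `C^i ∩ C^{i+1} = D^i` for all
`1 ≤ i ≤ ℓ`. -/
theorem cone_inter_eq {E : Type*} (n : E) (ℓ : ℕ) (F : ℕ → Set E)
    (hne : ∀ j, 1 ≤ j → j ≤ ℓ → (F j).Nonempty)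
    (hdisj : ∀ i j, 1 ≤ i → i ≤ ℓ → 1 ≤ j → j ≤ ℓ → i ≠ j → Disjoint (F i) (F j))
    (hunion : (⋃ j ∈ Set.Icc 1 ℓ, F j) = {n}ᶜ)
    (S : ℕ → Set E) (hS : ∀ j, S j = ⋃ m ∈ Set.Icc 1 j, F m)
    (C : ℕ → Set (E → ℝ))
    (hC : ∀ i, C i = {v | ∃ lam : ℕ → ℝ, ∃ μ : ℝ, (∀ j, 0 ≤ lam j) ∧
      v = (∑ j ∈ Finset.Icc 1 ℓ,
            lam j • ind (if j < i then S j else S (j - 1) ∪ {n})) +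
          μ • ind (Set.univ : Set E)})
    (D : ℕ → Set (E → ℝ))
    (hD : ∀ i, D i = {v | ∃ lam : ℕ → ℝ, ∃ μ : ℝ, (∀ j, 0 ≤ lam j) ∧
      v = (∑ j ∈ Finset.Icc 1 (ℓ - 1),
            lam j • ind (if j < i then S j else S j ∪ {n})) +
          μ • ind (Set.univ : Set E)}) :
    ∀ i, 1 ≤ i → i ≤ ℓ → C i ∩ C (i + 1) = D i := by
  intro i h1 h2
  have hrep : ∀ k, k = i ∨ k = i + 1 → ∀ lam : ℕ → ℝ,
      (∑ j ∈ Finset.Icc 1 ℓ, lam j • ind (if j < k then S j else S (j - 1) ∪ {n})) =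
        lam i • ind (if i < k then S i else S (i - 1) ∪ {n}) +
          ∑ j ∈ Finset.Icc 1 (ℓ - 1),
            lam (skip i j) • ind (if j < i then S j else S j ∪ {n}) := by
    intro k hk lam
    rw [sum_skip _ h1 h2]
    simp only [gen_skip n S hk]
  obtain ⟨x, hx⟩ := hne i h1 h2
  have hnF : ∀ j, 1 ≤ j → j ≤ ℓ → n ∉ F j := by
    intro j hj hj' hn
    have : n ∈ ({n}ᶜ : Set E) := hunion ▸ Set.mem_biUnion (Set.mem_Icc.2 ⟨hj, hj'⟩) hn
    exact this rfl
  have hnS : ∀ j ≤ i, n ∉ S j := by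
    intro j hj hn
    simp only [hS, Set.mem_iUnion, Set.mem_Icc] at hn
    obtain ⟨m, hm, hn⟩ := hn
    exact hnF m hm.1 (by omega) hn
  have hxS : ∀ j < i, x ∉ S j := by
    intro j hj hxj
    simp only [hS, Set.mem_iUnion, Set.mem_Icc] at hxj
    obtain ⟨m, hm, hxm⟩ := hxj
    exact Set.disjoint_left.1 (hdisj m i hm.1 (by omega) h1 h2 (by omega)) hxm hx
  have hxS' : ∀ j, i ≤ j → x ∈ S j := by
    intro j hj
    rw [hS]
    exact Set.mem_biUnion (Set.mem_Icc.2 ⟨h1, hj⟩) hx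
  have hxn : x ≠ n := by
    rintro rfl
    exact hnF i h1 h2 hx
  have hmerged := ind_merged_eq (fun j hj => hnS j hj.le) hxS hxS'
  ext v
  constructor
  · rintro ⟨hv, hv'⟩
    rw [hC] at hv hv'
    obtain ⟨a, μ, ha, hva⟩ := hv
    obtain ⟨b, ν, hb, hvb⟩ := hv'
    rw [hrep i (Or.inl rfl)] at hva
    rw [hrep (i + 1) (Or.inr rfl)] at hvb
    have ea : v n - v x = a i := by
      rw [hva]
      simp only [Pi.add_apply, Finset.sum_apply, Pi.smul_apply, smul_eq_mul, hmerged]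
      simp [ind, hxS (i - 1) (by omega), hxn]
    have eb : v x - v n = b i := by
      rw [hvb]
      simp only [Pi.add_apply, Finset.sum_apply, Pi.smul_apply, smul_eq_mul, hmerged]
      simp [ind, hxS' i le_rfl, hnS i le_rfl]
    have hai : a i = 0 := by linarith [ha i, hb i]
    rw [hD]
    refine ⟨fun j => a (skip i j), μ, fun j => ha _, ?_⟩
    rw [hva, hai, zero_smul, zero_add]
  · intro hv
    rw [hD] at hv
    obtain ⟨a, μ, ha, hva⟩ := hv
    have key : ∀ k, k = i ∨ k = i + 1 → v ∈ C k := by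
      intro k hk
      rw [hC]
      -- The coefficients of `D i`, spread over the positions other than `i`.
      refine ⟨fun j => if j < i then a j else if j = i then 0 else a (j - 1), μ, ?_, ?_⟩
      · intro j
        dsimp only
        split_ifs
        exacts [ha _, le_rfl, ha _]
      · have hs : ∀ j, (if skip i j < i then a (skip i j) else
            if skip i j = i then 0 else a (skip i j - 1)) = a j := by
          intro j
          by_cases h : j < i
          · simp [skip, h]
          · have h3 : ¬ j + 1 < i := by omega
            have h4 : j + 1 ≠ i := by omega
            simp [skip, h, h3, h4]
        rw [hrep k hk, hva]
        simp only [hs]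
        simp
    exact ⟨key i (Or.inl rfl), key (i + 1) (Or.inr rfl)⟩
end

section
/- Let E be a finite set, n ∈ E, and (F_1, …, F_ℓ) an ordered set partition of E ∖ {n}; write S_j = F_1 ∪ ⋯ ∪ F_j. Let π : ℝ^E → ℝ^{E∖{n}} be the coordinate projection forgetting the n-th coordinate, and let C_𝔉 ⊆ ℝ^{E∖{n}} be the set of all vectors Σ_{j=1}^{ℓ−1} λ_j·𝟙_{S_j} + μ·𝟙_{E∖{n}} with λ_j ≥ 0 and μ ∈ ℝ. For 1 ≤ i ≤ ℓ+1 let C^i ⊆ ℝ^E be the set of all vectors Σ_{j=1}^{ℓ} λ_j·𝟙_{T^i_j} + μ·𝟙_E with λ_j ≥ 0 and μ ∈ ℝ, where T^i_j = S_j for 1 ≤ j ≤ i−1 and T^i_j = S_{j−1} ∪ {n} for i ≤ j ≤ ℓ. Then π^{-1}(C_𝔉) = C^1 ∪ C^2 ∪ ⋯ ∪ C^{ℓ+1}. -/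
/-- Block index in the ordered partition obtained by inserting `{n}` at position `i` into the
partition of `E ∖ {n}` with block index `r`; the value of `r` at `n` plays no role. -/
noncomputable def insertIdx {E : Type*} (n : E) (i : ℕ) (r : E → ℕ) (e : E) : ℕ :=
  open Classical in if e = n then i else if r e < i then r e else r e + 1

/-- The cone of an ordered partition with block index `r` consists of the functions that are
constant on blocks and weakly decreasing in the block index. -/
theorem mem_cone_iff {X : Type*} (r : X → ℕ) (m : ℕ) (hr : ∀ x, 1 ≤ r x ∧ r x ≤ m + 1)
    (T : ℕ → Set X) (hT : ∀ j ∈ Finset.Icc 1 m, ∀ x, x ∈ T j ↔ r x ≤ j) (v : X → ℝ) :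
    (∃ lam : ℕ → ℝ, ∃ μ : ℝ, (∀ j, 0 ≤ lam j) ∧
      v = (∑ j ∈ Finset.Icc 1 m, lam j • ind (T j)) + μ • ind (Set.univ : Set X)) ↔
    ∃ a : ℕ → ℝ, AntitoneOn a (Set.Icc 1 (m + 1)) ∧ ∀ x, v x = a (r x) := by
  classical
  have key : ∀ (lam : ℕ → ℝ) (μ : ℝ) (x : X),
      ((∑ j ∈ Finset.Icc 1 m, lam j • ind (T j)) + μ • ind (Set.univ : Set X)) x =
        (∑ j ∈ Finset.Icc 1 m, if r x ≤ j then lam j else 0) + μ := by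
    intro lam μ x
    simp only [Pi.add_apply, Finset.sum_apply, Pi.smul_apply, ind, Set.indicator_univ,
      Pi.one_apply, smul_eq_mul, mul_one]
    congr 1
    refine Finset.sum_congr rfl fun j hj => ?_
    simp [Set.indicator_apply, hT j hj x]
  constructor
  · rintro ⟨lam, μ, hlam, rfl⟩
    refine ⟨fun k => (∑ j ∈ Finset.Icc 1 m, if k ≤ j then lam j else 0) + μ, ?_,
      fun x => key lam μ x⟩
    intro k _ l _ hkl
    simp only [add_le_add_iff_right]
    refine Finset.sum_le_sum fun j _ => ?_
    have := hlam j
    split_ifs <;> first | omega | linarith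
  · rintro ⟨a, ha, hv⟩
    -- Only the gaps with `1 ≤ j ≤ m` matter; truncating makes every coefficient nonnegative.
    refine ⟨fun j => max (a j - a (j + 1)) 0, a (m + 1), fun j => le_max_right _ _, ?_⟩
    funext x
    rw [key, hv]
    have hsum : ∀ (p k : ℕ), 1 ≤ k → k ≤ p + 1 →
        (∑ j ∈ Finset.Icc 1 p, if k ≤ j then a j - a (j + 1) else 0) = a k - a (p + 1) := by
      intro p k hk
      induction p with
      | zero =>
        intro h
        obtain rfl : k = 1 := by omega
        simp
      | succ p ih =>
        intro h
        rw [Finset.sum_Icc_succ_top (by omega)]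
        rcases Nat.lt_or_ge (p + 1) k with h' | h'
        · obtain rfl : k = p + 2 := by omega
          rw [Finset.sum_eq_zero]
          · simp
          · intro j hj
            rw [Finset.mem_Icc] at hj
            rw [if_neg (by omega)]
        · rw [ih h', if_pos h']
          ring
    have h1 := hsum m (r x) (hr x).1 (hr x).2
    have h2 : (∑ j ∈ Finset.Icc 1 m, if r x ≤ j then max (a j - a (j + 1)) 0 else 0) =
        ∑ j ∈ Finset.Icc 1 m, if r x ≤ j then a j - a (j + 1) else 0 := by
      refine Finset.sum_congr rfl fun j hj => ?_
      rw [Finset.mem_Icc] at hj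
      have := ha (a := j) ⟨hj.1, by omega⟩ (b := j + 1) ⟨by omega, by omega⟩ (Nat.le_succ j)
      rw [max_eq_left (by linarith)]
    rw [h2, h1]
    ring

/-- A real number `t` can be inserted into a finite weakly decreasing sequence. -/
theorem exists_insert_slot (ℓ : ℕ) (a : ℕ → ℝ) (ha : AntitoneOn a (Set.Icc 1 ℓ)) (t : ℝ) :
    ∃ i ∈ Set.Icc 1 (ℓ + 1), AntitoneOn
      (fun k => if k < i then a k else if k = i then t else a (k - 1)) (Set.Icc 1 (ℓ + 1)) := by
  classical
  have hex : ∃ i, 1 ≤ i ∧ (i = ℓ + 1 ∨ a i ≤ t) := ⟨ℓ + 1, by omega, Or.inl rfl⟩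
  obtain ⟨i, ⟨hi1, hi⟩, hmin⟩ : ∃ i, (1 ≤ i ∧ (i = ℓ + 1 ∨ a i ≤ t)) ∧
      ∀ k < i, ¬ (1 ≤ k ∧ (k = ℓ + 1 ∨ a k ≤ t)) :=
    ⟨Nat.find hex, Nat.find_spec hex, fun k hk => Nat.find_min hex hk⟩
  have hil : i ≤ ℓ + 1 := by
    by_contra h
    exact hmin (ℓ + 1) (by omega) ⟨by omega, Or.inl rfl⟩
  have hlow : ∀ k, 1 ≤ k → k < i → t ≤ a k := by
    intro k hk hki
    by_contra h
    exact hmin k hki ⟨hk, Or.inr (le_of_not_ge h)⟩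
  have hhigh : ∀ k, i ≤ k → k ≤ ℓ → a k ≤ t := by
    intro k hk hkl
    rcases hi with hi | hi
    · omega
    · exact (ha ⟨hi1, by omega⟩ ⟨by omega, hkl⟩ hk).trans hi
  refine ⟨i, ⟨hi1, hil⟩, ?_⟩
  rintro k ⟨hk1, hk2⟩ l ⟨hl1, hl2⟩ hkl
  dsimp only
  split_ifs <;> first
    | omega
    | exact le_rfl
    | exact hlow _ (by omega) (by omega)
    | exact hhigh _ (by omega) (by omega)
    | exact ha ⟨by omega, by omega⟩ ⟨by omega, by omega⟩ (by omega)

/-- For an ordered set partition `(F_1, …, F_ℓ)` of `E ∖ {n}` with initial unions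
`S_j = F_1 ∪ ⋯ ∪ F_j`, the preimage under the coordinate projection
`π : ℝ^E → ℝ^{E∖{n}}` of the cone `C_𝔉` is the union of the cones `C^1, …, C^{ℓ+1}`
obtained by inserting `{n}` into the ordered set partition in each possible slot. -/
theorem preimage_cone_eq_union {E : Type*} (n : E) (ℓ : ℕ) (F : ℕ → Set E)
    (hne : ∀ j, 1 ≤ j → j ≤ ℓ → (F j).Nonempty)
    (hdisj : ∀ i j, 1 ≤ i → i ≤ ℓ → 1 ≤ j → j ≤ ℓ → i ≠ j → Disjoint (F i) (F j))
    (hunion : (⋃ j ∈ Set.Icc 1 ℓ, F j) = {n}ᶜ)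
    (S : ℕ → Set E) (hS : ∀ j, S j = ⋃ m ∈ Set.Icc 1 j, F m)
    (CF : Set ({e : E // e ≠ n} → ℝ))
    (hCF : CF = {w | ∃ lam : ℕ → ℝ, ∃ μ : ℝ, (∀ j, 0 ≤ lam j) ∧
      w = (∑ j ∈ Finset.Icc 1 (ℓ - 1),
            lam j • ind (Subtype.val ⁻¹' S j)) +
          μ • ind (Set.univ : Set {e : E // e ≠ n})})
    (C : ℕ → Set (E → ℝ))
    (hC : ∀ i, C i = {v | ∃ lam : ℕ → ℝ, ∃ μ : ℝ, (∀ j, 0 ≤ lam j) ∧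
      v = (∑ j ∈ Finset.Icc 1 ℓ,
            lam j • ind (if j < i then S j else S (j - 1) ∪ {n})) +
          μ • ind (Set.univ : Set E)}) :
    (fun v : E → ℝ => fun e : {e : E // e ≠ n} => v (e : E)) ⁻¹' CF =
      ⋃ i ∈ Set.Icc 1 (ℓ + 1), C i := by
  classical
  have hidx : ∀ e : E, ∃ k, e ≠ n → (1 ≤ k ∧ k ≤ ℓ) ∧ e ∈ F k := by
    intro e
    by_cases he : e = n
    · exact ⟨0, fun h => absurd he h⟩
    · have : e ∈ ⋃ j ∈ Set.Icc 1 ℓ, F j := by rw [hunion]; exact he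
      simp only [Set.mem_iUnion, Set.mem_Icc, exists_prop] at this
      obtain ⟨k, hk, hek⟩ := this
      exact ⟨k, fun _ => ⟨hk, hek⟩⟩
  choose r hr using hidx
  have hSr : ∀ j, j ≤ ℓ → ∀ e, e ≠ n → (e ∈ S j ↔ r e ≤ j) := by
    intro j hj e he
    obtain ⟨⟨h1, h2⟩, h3⟩ := hr e he
    simp only [hS, Set.mem_iUnion, Set.mem_Icc, exists_prop]
    constructor
    · rintro ⟨k, ⟨hk1, hk2⟩, hek⟩
      by_contra hlt
      exact Set.disjoint_left.1
        (hdisj k (r e) hk1 (by omega) h1 h2 (by omega)) hek h3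
    · exact fun h => ⟨r e, ⟨h1, h⟩, h3⟩
  have hSn : ∀ j, j ≤ ℓ → n ∉ S j := by
    intro j hj hn
    simp only [hS, Set.mem_iUnion, Set.mem_Icc, exists_prop] at hn
    obtain ⟨k, ⟨hk1, hk2⟩, hnk⟩ := hn
    have : n ∈ ⋃ j ∈ Set.Icc 1 ℓ, F j := Set.mem_biUnion (x := k) ⟨hk1, by omega⟩ hnk
    rw [hunion] at this
    exact this rfl
  ext v
  have hL : v ∈ (fun v : E → ℝ => fun e : {e : E // e ≠ n} => v (e : E)) ⁻¹' CF ↔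
      ∃ a : ℕ → ℝ, AntitoneOn a (Set.Icc 1 (ℓ - 1 + 1)) ∧
        ∀ x : {e : E // e ≠ n}, v x = a (r x) := by
    rw [hCF]
    refine mem_cone_iff (fun x : {e : E // e ≠ n} => r x) (ℓ - 1) (fun x => ?_)
      (fun j => Subtype.val ⁻¹' S j) (fun j hj x => ?_) _
    · have := (hr x x.2).1
      omega
    · rw [Finset.mem_Icc] at hj
      exact hSr j (by omega) x x.2
  have hR : ∀ i ∈ Set.Icc 1 (ℓ + 1), (v ∈ C i ↔
      ∃ b : ℕ → ℝ, AntitoneOn b (Set.Icc 1 (ℓ + 1)) ∧ ∀ x, v x = b (insertIdx n i r x)) := by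
    rintro i ⟨hi1, hi2⟩
    rw [hC]
    refine mem_cone_iff (insertIdx n i r) ℓ (fun x => ?_)
      (fun j => if j < i then S j else S (j - 1) ∪ {n}) (fun j hj x => ?_) _
    · unfold insertIdx
      split_ifs with h1 h2
      · omega
      · have := (hr x h1).1
        omega
      · have := (hr x h1).1
        omega
    · rw [Finset.mem_Icc] at hj
      by_cases hx : x = n
      · subst hx
        by_cases hji : j < i
        · simp [insertIdx, hji, hSn j hj.2]
        · simp [insertIdx, hji, not_lt.1 hji]
      · have e1 := hSr j hj.2 x hx
        have e2 := hSr (j - 1) (by omega) x hx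
        simp only [insertIdx, if_neg hx]
        by_cases hji : j < i
        · rw [if_pos hji, e1]
          split_ifs <;> omega
        · rw [if_neg hji, Set.mem_union, e2, Set.mem_singleton_iff]
          simp only [hx, or_false]
          split_ifs <;> omega
  rw [hL]
  simp only [Set.mem_iUnion, exists_prop]
  constructor
  · rintro ⟨a, ha, hv⟩
    obtain ⟨i, hi, hb⟩ := exists_insert_slot ℓ a
      (ha.mono (Set.Icc_subset_Icc_right (by omega))) (v n)
    refine ⟨i, hi, (hR i hi).2 ⟨_, hb, fun x => ?_⟩⟩
    by_cases hx : x = n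
    · subst hx
      simp [insertIdx]
    · have hvx := hv ⟨x, hx⟩
      simp only at hvx
      simp only [insertIdx, if_neg hx, hvx]
      by_cases h : r x < i
      · simp [h]
      · rw [if_neg h, if_neg (by omega), if_neg (by omega), Nat.add_sub_cancel]
  · rintro ⟨i, hi, hvi⟩
    obtain ⟨b, hb, hv⟩ := (hR i hi).1 hvi
    refine ⟨fun k => if k < i then b k else b (k + 1), ?_, fun x => ?_⟩
    · rcases Nat.eq_zero_or_pos ℓ with h0 | h0
      · -- For `ℓ = 0` the truncated `ℓ - 1 + 1` is `1`, so the index set is a single point.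
        subst h0
        rintro k ⟨hk1, hk2⟩ l ⟨hl1, hl2⟩ _
        obtain rfl : k = l := by omega
        exact le_rfl
      · rintro k ⟨hk1, hk2⟩ l ⟨hl1, hl2⟩ hkl
        dsimp only
        split_ifs <;> first
          | omega
          | exact hb ⟨by omega, by omega⟩ ⟨by omega, by omega⟩ (by omega)
    · rw [hv x]
      simp only [insertIdx, if_neg x.2]
      split_ifs <;> rfl
end
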